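/- Let A : Fin d → Matrix (Fin D) (Fin D) ℂ be an injective MPS tensor, i.e., the linear map X ↦ (Tr(X · A^i))_{i=1}^d from Matrix (Fin D) (Fin D) ℂ to ℂ^d is injective. Then the linear map Q ↦ E_Q := ∑_{i,j=1}^{d} Q_{ij} · conj(A^i) ⊗ A^j, from Matrix (Fin d) (Fin d) ℂ to Matrix (Fin D × Fin D) (Fin D × Fin D) ℂ, is surjective: every D²×D² complex matrix arises as E_Q for some d×d matrix Q. In particular, for any vectors a, b ∈ ℂ^{D²} there is a d×d matrix O with E_O = a·bᴴ. -/

import Mathlib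

open Matrix Kronecker

/-- The generalized transfer matrix `E_Q = ∑ i j, Q i j • (conj (A i) ⊗ₖ A j)` of an MPS tensor
with respect to a single-site operator `Q`. -/
noncomputable def genTransferMatrix {d D : ℕ} (A : Fin d → Matrix (Fin D) (Fin D) ℂ)
    (Q : Matrix (Fin d) (Fin d) ℂ) : Matrix (Fin D × Fin D) (Fin D × Fin D) ℂ :=
  ∑ i, ∑ j, Q i j • ((A i).map (starRingEnd ℂ) ⊗ₖ A j)

/-!
Under the trace pairing, injectivity of `X ↦ (Tr (X * A i))ᵢ` says that no nonzero functional
vanishes on all the `A i`, so they span the matrix algebra. Entrywise conjugation is semilinear and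
surjective, so the `conj (A i)` span as well, and Kronecker products of two spanning families span
the tensor product. The entries of `Q` are the coefficients of `E_Q` in the resulting family.
-/

section SpanningFamilies

variable {l m n p ι κ : Type*}

theorem exists_forall_eq_trace_mul {R : Type*} [CommSemiring R] [Fintype m] [Fintype n]
    (f : Module.Dual R (Matrix m n R)) :
    ∃ X : Matrix n m R, ∀ M, f M = (X * M).trace := by
  classical
  let X : Matrix n m R := of fun j i => f (single i j 1)
  have hX : f = traceLinearMap n R R ∘ₗ mulLeftLinearMap n R X :=
    (stdBasis R m n).ext fun ⟨i, j⟩ => by simp [X, stdBasis_eq_single, trace_mul_single]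
  exact ⟨X, LinearMap.congr_fun hX⟩

theorem span_range_eq_top_of_injective_trace_mul {K : Type*} [Field K] [Fintype m] [Fintype n]
    {A : ι → Matrix m n K}
    (hA : Function.Injective fun (X : Matrix n m K) i => (X * A i).trace) :
    Submodule.span K (Set.range A) = ⊤ := by
  by_contra hspan
  obtain ⟨f, hf_ne, hf⟩ := Submodule.exists_le_ker_of_lt_top _ (lt_top_iff_ne_top.mpr hspan)
  obtain ⟨X, hX⟩ := exists_forall_eq_trace_mul f
  have hX_zero : X = 0 := hA <| funext fun i => by
    have hfA : f (A i) = 0 := hf (Submodule.subset_span ⟨i, rfl⟩)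
    simpa [hX] using hfA
  exact hf_ne <| LinearMap.ext fun M => by simp [hX, hX_zero]

theorem span_range_map_eq_top {R S : Type*} [Semiring R] [Semiring S] (σ : R →+* S)
    [RingHomSurjective σ] {A : ι → Matrix m n R} (hA : Submodule.span R (Set.range A) = ⊤) :
    Submodule.span S (Set.range fun i => (A i).map σ) = ⊤ := by
  let mapσ : Matrix m n R →ₛₗ[σ] Matrix m n S := σ.toSemilinearMap.mapMatrix
  have hmapσ : Function.Surjective mapσ := fun M =>
    ⟨M.map (Function.surjInv σ.surjective), by
      ext i j; exact Function.surjInv_eq σ.surjective (M i j)⟩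
  calc Submodule.span S (Set.range fun i => (A i).map σ)
      = (Submodule.span R (Set.range A)).map mapσ := by
        rw [Submodule.map_span, ← Set.range_comp]; rfl
    _ = ⊤ := by rw [hA, Submodule.map_top, LinearMap.range_eq_top.mpr hmapσ]

theorem span_range_tmul_eq_top {R M N : Type*} [CommSemiring R] [AddCommMonoid M]
    [AddCommMonoid N] [Module R M] [Module R N] {v : ι → M} {w : κ → N}
    (hv : Submodule.span R (Set.range v) = ⊤) (hw : Submodule.span R (Set.range w) = ⊤) :
    Submodule.span R (Set.range fun ij : ι × κ => v ij.1 ⊗ₜ[R] w ij.2) = ⊤ := by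
  rw [← TensorProduct.map₂_mk_top_top_eq_top, ← hv, ← hw, Submodule.map₂_span_span,
    Set.image2_range]
  rfl

theorem span_range_kronecker_eq_top {R : Type*} [CommSemiring R]
    [Finite l] [Finite m] [Finite n] [Finite p]
    {A : ι → Matrix l m R} {B : κ → Matrix n p R}
    (hA : Submodule.span R (Set.range A) = ⊤) (hB : Submodule.span R (Set.range B) = ⊤) :
    Submodule.span R (Set.range fun ij : ι × κ => A ij.1 ⊗ₖ B ij.2) = ⊤ := by
  classical
  cases nonempty_fintype l
  cases nonempty_fintype m
  cases nonempty_fintype n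
  cases nonempty_fintype p
  let e := kroneckerLinearEquiv l m n p R
  calc Submodule.span R (Set.range fun ij : ι × κ => A ij.1 ⊗ₖ B ij.2)
      = (Submodule.span R (Set.range fun ij : ι × κ => A ij.1 ⊗ₜ[R] B ij.2)).map
          e.toLinearMap := by
        rw [Submodule.map_span, ← Set.range_comp]; rfl
    _ = ⊤ := by rw [span_range_tmul_eq_top hA hB, Submodule.map_top, LinearEquiv.range]

end SpanningFamilies

theorem genTransferMatrix_surjective_of_span_eq_top {d D : ℕ}
    {A : Fin d → Matrix (Fin D) (Fin D) ℂ} (hA : Submodule.span ℂ (Set.range A) = ⊤) :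
    Function.Surjective (genTransferMatrix A) := by
  intro M
  have hM : M ∈ Submodule.span ℂ
      (Set.range fun ij : Fin d × Fin d => (A ij.1).map (starRingEnd ℂ) ⊗ₖ A ij.2) := by
    rw [span_range_kronecker_eq_top (span_range_map_eq_top (starRingEnd ℂ) hA) hA]
    exact Submodule.mem_top
  obtain ⟨c, hc⟩ := (Submodule.mem_span_range_iff_exists_fun ℂ).mp hM
  exact ⟨of fun i j => c (i, j), by rw [← hc, Fintype.sum_prod_type]; rfl⟩

/-- for an injective MPS tensor `A`, the map `Q ↦ E_Q` from `d×d` matrices to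
`D²×D²` matrices is surjective; in particular every rank-one matrix `a bᴴ` is of the form
`E_O` for some single-site operator `O`. -/
theorem genTransferMatrix_surjective_of_injective {d D : ℕ}
    (A : Fin d → Matrix (Fin D) (Fin D) ℂ)
    (hinj : Function.Injective
      (fun X : Matrix (Fin D) (Fin D) ℂ => (fun i => (X * A i).trace : Fin d → ℂ))) :
    Function.Surjective (fun Q : Matrix (Fin d) (Fin d) ℂ => genTransferMatrix A Q) ∧
    ∀ a b : Fin D × Fin D → ℂ, ∃ O : Matrix (Fin d) (Fin d) ℂ,
      genTransferMatrix A O = Matrix.vecMulVec a (fun β => (starRingEnd ℂ) (b β)) := by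
  have hsurj : Function.Surjective (genTransferMatrix A) :=
    genTransferMatrix_surjective_of_span_eq_top (span_range_eq_top_of_injective_trace_mul hinj)
  exact ⟨hsurj, fun _ _ => hsurj _⟩
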